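/- Let 1 ≤ q < p ≤ ∞ and define r by 1/q = 1/p + 1/r, and suppose r = 2. Then there is an absolute constant c such that for every bounded linear operator T : X → Y between real Banach spaces whose rank is at most n one has π_{p,q}(T) ≤ c · π_{p,q}^{m}(T), where m = ⌊n(1 + ln n)⌋. -/

import Mathlib

open scoped ENNReal NNReal BigOperators

noncomputable section

/-- The `ℓ_p`-sum `(∑ i, f i ^ p) ^ (1/p)` of a finite family in `ℝ≥0∞`,
with the usual sup-modification for `p = ∞`. -/
def eSum (p : ℝ≥0∞) {ι : Type*} [Fintype ι] (f : ι → ℝ≥0∞) : ℝ≥0∞ :=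
  if p = ∞ then ⨆ i, f i else (∑ i, f i ^ p.toReal) ^ (1 / p.toReal)

/-- The weak `ℓ_q`-norm of a finite family of vectors:
`sup { (∑ k |⟨x_k, x*⟩|^q)^(1/q) : x* in the unit ball of the dual }`. -/
def weakLq (q : ℝ≥0∞) {X : Type*} [NormedAddCommGroup X] [NormedSpace ℝ X]
    {n : ℕ} (x : Fin n → X) : ℝ≥0∞ :=
  ⨆ f : {f : X →L[ℝ] ℝ // ‖f‖ ≤ 1}, eSum q fun k => ENNReal.ofReal |f.1 (x k)|

/-- The `(p,q)`-summing norm of `T` with respect to `n` vectors. -/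
def piN (p q : ℝ≥0∞) {X Y : Type*} [NormedAddCommGroup X] [NormedSpace ℝ X]
    [NormedAddCommGroup Y] [NormedSpace ℝ Y] (n : ℕ) (T : X →L[ℝ] Y) : ℝ≥0∞ :=
  ⨆ x : {x : Fin n → X // weakLq q x ≤ 1}, eSum p fun k => ENNReal.ofReal ‖T (x.1 k)‖

/-- The `(p,q)`-summing norm of `T`. -/
def piPQ (p q : ℝ≥0∞) {X Y : Type*} [NormedAddCommGroup X] [NormedSpace ℝ X]
    [NormedAddCommGroup Y] [NormedSpace ℝ Y] (T : X →L[ℝ] Y) : ℝ≥0∞ :=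
  ⨆ n : ℕ, piN p q n T

/-- `T` has rank at most `n`: its range is a finite-dimensional subspace of
dimension at most `n`. -/
def RankLE {X Y : Type*} [NormedAddCommGroup X] [NormedSpace ℝ X]
    [NormedAddCommGroup Y] [NormedSpace ℝ Y] (T : X →L[ℝ] Y) (n : ℕ) : Prop :=
  FiniteDimensional ℝ (LinearMap.range (T : X →ₗ[ℝ] Y)) ∧
    Module.finrank ℝ (LinearMap.range (T : X →ₗ[ℝ] Y)) ≤ n

/-- The average of `‖∑ k, ε k • x k‖²` over all `2^n` sign choices `ε ∈ {-1,1}^n`. -/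
def radAvg {X : Type*} [NormedAddCommGroup X] [NormedSpace ℝ X] {n : ℕ}
    (x : Fin n → X) : ℝ :=
  (∑ ε : Fin n → Bool, ‖∑ k, (if ε k then (1 : ℝ) else -1) • x k‖ ^ 2) / 2 ^ n

/-- The Rademacher cotype `q` constant of `T` with respect to `n` vectors. -/
def cotypeN (q : ℝ) {X Y : Type*} [NormedAddCommGroup X] [NormedSpace ℝ X]
    [NormedAddCommGroup Y] [NormedSpace ℝ Y] (n : ℕ) (T : X →L[ℝ] Y) : ℝ≥0∞ :=
  ⨆ x : {x : Fin n → X // Real.sqrt (radAvg x) ≤ 1},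
    (∑ k, ENNReal.ofReal ‖T (x.1 k)‖ ^ q) ^ (1 / q)

/-- The Rademacher cotype `q` constant of `T`. -/
def cotype (q : ℝ) {X Y : Type*} [NormedAddCommGroup X] [NormedSpace ℝ X]
    [NormedAddCommGroup Y] [NormedSpace ℝ Y] (T : X →L[ℝ] Y) : ℝ≥0∞ :=
  ⨆ n : ℕ, cotypeN q n T


/-! Real-variable core of the argument. -/

/-- Trace versus Hilbert-Schmidt norm for a matrix of rank at most `n`. -/
lemma trace_sq_le {V ι : Type*} [AddCommGroup V] [Module ℝ V] [FiniteDimensional ℝ V]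
    [Fintype ι] (n : ℕ) (hn : Module.finrank ℝ V ≤ n) (v : ι → V) (φ : ι → V →ₗ[ℝ] ℝ) :
    (∑ i, φ i (v i)) ^ 2 ≤ n * ∑ i, ∑ k, (φ k (v i)) ^ 2 := by
  classical
  let Φ : V →ₗ[ℝ] EuclideanSpace ℝ ι :=
    (WithLp.linearEquiv 2 ℝ (ι → ℝ)).symm.toLinearMap ∘ₗ LinearMap.pi φ
  have hΦ : ∀ w k, Φ w k = φ k w := fun w k => rfl
  let U := LinearMap.range Φ
  have hU : Module.finrank ℝ U ≤ n := (LinearMap.finrank_range_le Φ).trans hn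
  let b := stdOrthonormalBasis ℝ U
  have hmem : ∀ i, Φ (v i) ∈ U := fun i => LinearMap.mem_range_self _ _
  let u : ι → U := fun i => ⟨Φ (v i), hmem i⟩
  let c : ι → Fin (Module.finrank ℝ U) → ℝ := fun i j => inner ℝ (b j) (u i)
  have h1 : ∀ i, φ i (v i) = ∑ j, c i j * (b j : EuclideanSpace ℝ ι) i := by
    intro i
    have h := b.sum_repr' (u i)
    have h2 := congrArg (fun z : U => (z : EuclideanSpace ℝ ι) i) h
    simp only [Submodule.coe_sum, Submodule.coe_smul, WithLp.ofLp_sum, Finset.sum_apply,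
      WithLp.ofLp_smul, Pi.smul_apply, smul_eq_mul] at h2
    rw [← hΦ]
    exact h2.symm
  have h3 : ∀ i, ∑ j, c i j ^ 2 = ∑ k, (φ k (v i)) ^ 2 := by
    intro i
    have h := b.sum_sq_norm_inner_right (u i)
    have h' : ‖u i‖ ^ 2 = ∑ k, (φ k (v i)) ^ 2 := by
      change ‖Φ (v i)‖ ^ 2 = _
      rw [EuclideanSpace.norm_sq_eq]
      simp [hΦ]
    rw [← h', ← h]
    simp [c]
  have h4 : ∑ i, ∑ j, ((b j : EuclideanSpace ℝ ι) i) ^ 2 = Module.finrank ℝ U := by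
    rw [Finset.sum_comm]
    have : ∀ j, ∑ i, ((b j : EuclideanSpace ℝ ι) i) ^ 2 = 1 := by
      intro j
      have h := b.orthonormal.1 j
      have h' : ‖(b j : EuclideanSpace ℝ ι)‖ ^ 2 = 1 := by
        change ‖b j‖ ^ 2 = 1
        rw [h]; norm_num
      rw [EuclideanSpace.norm_sq_eq] at h'
      simpa using h'
    simp [this]
  have hcs := Finset.sum_mul_sq_le_sq_mul_sq (Finset.univ : Finset (ι × Fin (Module.finrank ℝ U)))
    (fun z => c z.1 z.2) (fun z => (b z.2 : EuclideanSpace ℝ ι) z.1)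
  simp only [Fintype.sum_prod_type] at hcs
  simp only [h3, h4] at hcs
  simp only [← h1] at hcs
  refine hcs.trans ?_
  rw [mul_comm]
  have h0 : 0 ≤ ∑ i, ∑ k, (φ k (v i)) ^ 2 := by positivity
  have : (Module.finrank ℝ U : ℝ) ≤ n := by exact_mod_cast hU
  gcongr

/-- A vector which is dominated by the weak `ℓ_2` norm has `ℓ_2`-norm at most a logarithm. -/
lemma sum_sq_le_harmonic {ι : Type*} (τ : ℝ) (y : ι → ℝ) :
    ∀ (N : ℕ) (G : Finset ι), G.card = N →
      (∀ A ⊆ G, A.Nonempty → ∑ i ∈ A, |y i| ≤ τ * Real.sqrt A.card) →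
      ∑ i ∈ G, y i ^ 2 ≤ τ ^ 2 * (harmonic N : ℝ) := by
  classical
  intro N
  induction N with
  | zero =>
    intro G hG _
    rw [Finset.card_eq_zero] at hG
    simp [hG]
  | succ N ih =>
    intro G hG h
    have hne : G.Nonempty := by
      rw [← Finset.card_pos]; omega
    obtain ⟨i, hi, hmin⟩ := Finset.exists_min_image G (fun i => |y i|) hne
    have h1 := ih (G.erase i) (by rw [Finset.card_erase_of_mem hi]; omega)
      (fun A hA hA' => h A (hA.trans (Finset.erase_subset _ _)) hA')
    have h2 := h G subset_rfl hne
    have h3 : (G.card : ℝ) * |y i| ≤ ∑ i ∈ G, |y i| := by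
      have := Finset.card_nsmul_le_sum G (fun i => |y i|) (|y i|) hmin
      simpa using this
    have hc : (G.card : ℝ) = (N : ℝ) + 1 := by rw [hG]; push_cast; ring
    rw [hc] at h2 h3
    have hpos : (0 : ℝ) < (N : ℝ) + 1 := by positivity
    have h4 : ((N : ℝ) + 1) * |y i| ≤ τ * Real.sqrt ((N : ℝ) + 1) := h3.trans h2
    have h5 : (((N : ℝ) + 1) * |y i|) ^ 2 ≤ (τ * Real.sqrt ((N : ℝ) + 1)) ^ 2 := by
      gcongr
    rw [mul_pow, mul_pow, sq_abs, Real.sq_sqrt hpos.le] at h5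
    have h6 : y i ^ 2 ≤ τ ^ 2 * ((N : ℝ) + 1)⁻¹ := by
      rw [← div_eq_mul_inv, le_div_iff₀ hpos]
      nlinarith
    rw [← Finset.add_sum_erase G _ hi, harmonic_succ]
    push_cast
    rw [mul_add]
    linarith

/-- All finite families of at most `M` vectors with weak `ℓ_q`-norm at most one satisfy the
summing inequality with constant `P` (after taking `p`-th powers). -/
def Bd (p q : ℝ) {X Y : Type*} [NormedAddCommGroup X] [NormedSpace ℝ X]
    [NormedAddCommGroup Y] [NormedSpace ℝ Y] (T : X →L[ℝ] Y) (M : ℕ) (P : ℝ) : Prop :=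
  ∀ (ι : Type) (s : Finset ι) (x : ι → X), s.card ≤ M →
    (∀ f : X →L[ℝ] ℝ, ‖f‖ ≤ 1 → ∑ i ∈ s, |f (x i)| ^ q ≤ 1) → ∑ i ∈ s, ‖T (x i)‖ ^ p ≤ P

section core
variable {X Y : Type*} [NormedAddCommGroup X] [NormedSpace ℝ X]
    [NormedAddCommGroup Y] [NormedSpace ℝ Y]

/-- Greedy selection: removing at most half of the vectors, all signed sums are small. -/
lemma greedy (p q : ℝ) (hq : 1 ≤ q) (hp : 2 ≤ p) (hpq : 1 / q = 1 / p + 1 / 2)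
    (T : X →L[ℝ] Y) (N : ℕ) (P : ℝ) (hP : 0 < P) (hB : Bd p q T N P)
    {ι : Type} (s : Finset ι) (x : ι → X) (hs : s.card ≤ N) (hs0 : s.Nonempty)
    (hx : ∀ f : X →L[ℝ] ℝ, ‖f‖ ≤ 1 → ∑ i ∈ s, |f (x i)| ^ q ≤ 1) :
    ∃ G ⊆ s, s.card ≤ 2 * G.card ∧ ∀ A ⊆ G, A.Nonempty → ∀ ε : ι → ℝ, (∀ i, |ε i| ≤ 1) →
      ‖T (∑ i ∈ A, ε i • x i)‖ ≤ (2 * P / s.card) ^ (1 / p) * Real.sqrt A.card := by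
  classical
  set τ : ℝ := (2 * P / s.card) ^ (1 / p) with hτ
  have hK : (0 : ℝ) < s.card := by exact_mod_cast hs0.card_pos
  have hτ0 : 0 ≤ τ := by positivity
  have hp0 : 0 < p := by linarith
  have hq0 : 0 < q := by linarith
  have hτp : τ ^ p = 2 * P / s.card := by
    rw [hτ, ← Real.rpow_mul (by positivity), one_div_mul_cancel hp0.ne', Real.rpow_one]
  let bad : Finset ι → Prop := fun A => A.Nonempty ∧ ∃ ε : ι → ℝ, (∀ i, |ε i| ≤ 1) ∧
    τ * Real.sqrt A.card < ‖T (∑ i ∈ A, ε i • x i)‖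
  let F := (s.powerset.powerset).filter
    (fun 𝒜 : Finset (Finset ι) => (∀ A ∈ 𝒜, bad A) ∧ (𝒜 : Set (Finset ι)).PairwiseDisjoint id)
  have hFne : F.Nonempty := ⟨∅, by simp [F]⟩
  obtain ⟨𝒜, h𝒜, hmax⟩ := Finset.exists_max_image F Finset.card hFne
  simp only [F, Finset.mem_filter, Finset.mem_powerset] at h𝒜
  obtain ⟨hsub, hbad, hdisj⟩ := h𝒜
  have hUs : 𝒜.biUnion id ⊆ s := by
    intro i hi
    simp only [Finset.mem_biUnion, id] at hi
    obtain ⟨A, hA, hiA⟩ := hi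
    exact Finset.mem_powerset.1 (hsub hA) hiA
  have hUcard : (𝒜.biUnion id).card = ∑ A ∈ 𝒜, A.card := Finset.card_biUnion hdisj
  -- size of the removed part
  have hsize : 2 * (𝒜.biUnion id).card ≤ s.card := by
    have hch : ∀ A : Finset ι, ∃ ε : ι → ℝ, A ∈ 𝒜 → (∀ i, |ε i| ≤ 1) ∧
        τ * Real.sqrt A.card < ‖T (∑ i ∈ A, ε i • x i)‖ := by
      intro A
      by_cases hA : A ∈ 𝒜
      · obtain ⟨_, ε, h1, h2⟩ := hbad A hA
        exact ⟨ε, fun _ => ⟨h1, h2⟩⟩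
      · exact ⟨0, fun h => absurd h hA⟩
    choose ε hε using hch
    let e : ℝ := (q - 1) / q
    let z : Finset ι → X := fun A => ((A.card : ℝ) ^ (-e)) • ∑ i ∈ A, ε A i • x i
    have hcard𝒜 : 𝒜.card ≤ N := by
      refine le_trans ?_ ((Finset.card_le_card hUs).trans hs)
      rw [hUcard, Finset.card_eq_sum_ones]
      exact Finset.sum_le_sum fun A hA => (hbad A hA).1.card_pos
    have hz : ∀ f : X →L[ℝ] ℝ, ‖f‖ ≤ 1 → ∑ A ∈ 𝒜, |f (z A)| ^ q ≤ 1 := by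
      intro f hf
      calc ∑ A ∈ 𝒜, |f (z A)| ^ q ≤ ∑ A ∈ 𝒜, ∑ i ∈ A, |f (x i)| ^ q := by
            refine Finset.sum_le_sum fun A hA => ?_
            have hc : (0 : ℝ) < A.card := by exact_mod_cast (hbad A hA).1.card_pos
            have h1 : |f (z A)| ≤ (A.card : ℝ) ^ (-e) * ∑ i ∈ A, |f (x i)| := by
              simp only [z, map_smul, map_sum, smul_eq_mul, abs_mul]
              rw [abs_of_nonneg (by positivity)]
              gcongr
              refine (Finset.abs_sum_le_sum_abs _ _).trans (Finset.sum_le_sum fun i hi => ?_)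
              rw [abs_mul]
              have := (hε A hA).1 i
              have h0 := abs_nonneg (f (x i))
              nlinarith
            have h2 := Real.rpow_sum_le_const_mul_sum_rpow A (fun i => f (x i)) hq
            calc |f (z A)| ^ q ≤ ((A.card : ℝ) ^ (-e) * ∑ i ∈ A, |f (x i)|) ^ q := by gcongr
              _ = (A.card : ℝ) ^ (-(q - 1)) * (∑ i ∈ A, |f (x i)|) ^ q := by
                  rw [Real.mul_rpow (by positivity) (by positivity), ← Real.rpow_mul hc.le]
                  congr 2
                  simp only [e]; field_simp
              _ ≤ (A.card : ℝ) ^ (-(q - 1)) * ((A.card : ℝ) ^ (q - 1) * ∑ i ∈ A, |f (x i)| ^ q) := by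
                  gcongr
              _ = ∑ i ∈ A, |f (x i)| ^ q := by
                  rw [← mul_assoc, ← Real.rpow_add hc]; simp
        _ = ∑ i ∈ 𝒜.biUnion id, |f (x i)| ^ q := (Finset.sum_biUnion hdisj).symm
        _ ≤ ∑ i ∈ s, |f (x i)| ^ q :=
            Finset.sum_le_sum_of_subset_of_nonneg hUs fun i _ _ => by positivity
        _ ≤ 1 := hx f hf
    have hsum := hB (Finset ι) 𝒜 z hcard𝒜 hz
    have hlow : ∑ A ∈ 𝒜, τ ^ p * (A.card : ℝ) ≤ ∑ A ∈ 𝒜, ‖T (z A)‖ ^ p := by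
      refine Finset.sum_le_sum fun A hA => ?_
      have hc : (0 : ℝ) < A.card := by exact_mod_cast (hbad A hA).1.card_pos
      have h1 := (hε A hA).2.le
      have h2 : ‖T (z A)‖ = (A.card : ℝ) ^ (-e) * ‖T (∑ i ∈ A, ε A i • x i)‖ := by
        simp only [z, map_smul]
        rw [norm_smul, Real.norm_of_nonneg (by positivity)]
      rw [h2]
      calc τ ^ p * (A.card : ℝ) = ((A.card : ℝ) ^ (-e) * (τ * Real.sqrt A.card)) ^ p := by
            rw [Real.sqrt_eq_rpow, mul_left_comm, ← Real.rpow_add hc,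
              Real.mul_rpow hτ0 (by positivity), ← Real.rpow_mul hc.le]
            have : (-e + 1 / 2) * p = 1 := by
              have h3 : -e + 1 / 2 = 1 / p := by
                have : e = 1 - 1 / q := by simp only [e]; field_simp
                rw [this, hpq]; ring
              rw [h3]; field_simp
            rw [this, Real.rpow_one]
        _ ≤ _ := by gcongr
    rw [← Finset.mul_sum, hτp] at hlow
    have h5 : 2 * P / s.card * ∑ A ∈ 𝒜, (A.card : ℝ) ≤ P := hlow.trans hsum
    have h6 : (∑ A ∈ 𝒜, (A.card : ℝ)) = ((𝒜.biUnion id).card : ℝ) := by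
      rw [hUcard]; push_cast; rfl
    rw [h6, div_mul_eq_mul_div, div_le_iff₀ hK] at h5
    have h7 : 2 * ((𝒜.biUnion id).card : ℝ) ≤ s.card := by
      have : P * (2 * ((𝒜.biUnion id).card : ℝ)) ≤ P * s.card := by linarith
      exact le_of_mul_le_mul_left this hP
    exact_mod_cast h7
  refine ⟨s \ 𝒜.biUnion id, Finset.sdiff_subset, ?_, ?_⟩
  · rw [Finset.card_sdiff_of_subset hUs]
    omega
  · intro A hA hAne ε hε
    by_contra hcon
    push Not at hcon
    have hbA : bad A := ⟨hAne, ε, hε, hcon⟩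
    have hd : ∀ B ∈ 𝒜, Disjoint A B := by
      intro B hB
      rw [Finset.disjoint_left]
      intro i hi hiB
      have := Finset.mem_sdiff.1 (hA hi)
      exact this.2 (Finset.mem_biUnion.2 ⟨B, hB, hiB⟩)
    have hnot : A ∉ 𝒜 := by
      intro h
      have := hd A h
      rw [disjoint_self] at this
      exact hAne.ne_empty this
    have hin : insert A 𝒜 ∈ F := by
      simp only [F, Finset.mem_filter, Finset.mem_powerset]
      refine ⟨?_, ?_, ?_⟩
      · intro B hB
        rcases Finset.mem_insert.1 hB with rfl | hB
        · exact Finset.mem_powerset.2 (hA.trans Finset.sdiff_subset)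
        · exact hsub hB
      · intro B hB
        rcases Finset.mem_insert.1 hB with rfl | hB
        · exact hbA
        · exact hbad B hB
      · rw [Finset.coe_insert]
        refine hdisj.insert fun B hB _ => hd B hB
    have := hmax _ hin
    rw [Finset.card_insert_of_notMem hnot] at this
    omega

/-- The key estimate: many large vectors force a gain. -/
lemma key (p q : ℝ) (hq : 1 ≤ q) (hp : 2 ≤ p) (hpq : 1 / q = 1 / p + 1 / 2)
    (T : X →L[ℝ] Y) (n : ℕ) [FiniteDimensional ℝ (LinearMap.range (T : X →ₗ[ℝ] Y))]
    (hn : Module.finrank ℝ (LinearMap.range (T : X →ₗ[ℝ] Y)) ≤ n)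
    (N : ℕ) (P : ℝ) (hP : 0 < P) (hB : Bd p q T N P)
    {ι : Type} (s : Finset ι) (x : ι → X) (hs : s.card ≤ N) (hs0 : s.Nonempty)
    (hx : ∀ f : X →L[ℝ] ℝ, ‖f‖ ≤ 1 → ∑ i ∈ s, |f (x i)| ^ q ≤ 1)
    (t : ℝ) (ht : 0 ≤ t) (hts : ∀ i ∈ s, t ≤ ‖T (x i)‖)
    (hsmall : 4 * n * (1 + Real.log s.card) / s.card ≤ 1) :
    t ^ p ≤ P * (4 * n * (1 + Real.log s.card) / s.card ^ 2) := by
  classical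
  obtain ⟨G, hGs, hGc, hG⟩ := greedy p q hq hp hpq T N P hP hB s x hs hs0 hx
  set τ : ℝ := (2 * P / s.card) ^ (1 / p) with hτ
  have hK : (0 : ℝ) < s.card := by exact_mod_cast hs0.card_pos
  have hτ0 : 0 ≤ τ := by positivity
  have hp0 : 0 < p := by linarith
  have hτp : τ ^ p = 2 * P / s.card := by
    rw [hτ, ← Real.rpow_mul (by positivity), one_div_mul_cancel hp0.ne', Real.rpow_one]
  have hGpos : 0 < G.card := by have := hs0.card_pos; omega
  have hg : (0 : ℝ) < G.card := by exact_mod_cast hGpos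
  have hgK : (G.card : ℝ) ≤ s.card := by exact_mod_cast Finset.card_le_card hGs
  have hKg : (s.card : ℝ) ≤ 2 * G.card := by exact_mod_cast hGc
  choose g hg1 hg2 using fun i : ι => exists_dual_vector'' ℝ (T (x i))
  have hrow : ∀ k, ∑ i ∈ G, (g k (T (x i))) ^ 2 ≤ τ ^ 2 * (1 + Real.log s.card) := by
    intro k
    have h1 := sum_sq_le_harmonic τ (fun i => g k (T (x i))) G.card G rfl (by
      intro A hA hAne
      have h := hG A hA hAne (fun i => SignType.sign (g k (T (x i)))) (by
        intro i
        rcases SignType.sign (g k (T (x i))) with _ | _ | _ <;> simp)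
      refine le_trans ?_ h
      have h2 : ∑ i ∈ A, |g k (T (x i))| =
          g k (T (∑ i ∈ A, ((SignType.sign (g k (T (x i))) : SignType) : ℝ) • x i)) := by
        simp only [map_sum, map_smul, smul_eq_mul]
        refine Finset.sum_congr rfl fun i _ => ?_
        rw [sign_mul_self]
      rw [h2]
      refine (le_abs_self _).trans ?_
      refine ((g k).le_opNorm _).trans ?_
      exact mul_le_of_le_one_left (norm_nonneg _) (hg1 k))
    refine h1.trans ?_
    gcongr
    refine (harmonic_le_one_add_log _).trans ?_
    gcongr
  have htr := trace_sq_le (V := LinearMap.range (T : X →ₗ[ℝ] Y)) (ι := G) n hn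
    (fun i => ⟨T (x i), LinearMap.mem_range_self (T : X →ₗ[ℝ] Y) _⟩)
    (fun k => (g k : Y →ₗ[ℝ] ℝ) ∘ₗ Submodule.subtype _)
  simp only [LinearMap.comp_apply, Submodule.subtype_apply, ContinuousLinearMap.coe_coe, hg2] at htr
  have hL : (G.card : ℝ) * t ≤ ∑ i : G, ‖T (x i)‖ := by
    have := Finset.card_nsmul_le_sum (Finset.univ : Finset G) (fun i => ‖T (x i)‖) t
      (fun i _ => hts i (hGs i.2))
    simpa using this
  have hR : ∑ i : G, ∑ k : G, (g k (T (x i))) ^ 2 ≤ G.card * (τ ^ 2 * (1 + Real.log s.card)) := by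
    rw [Finset.sum_comm]
    have : ∀ k : G, ∑ i : G, (g k (T (x i))) ^ 2 ≤ τ ^ 2 * (1 + Real.log s.card) := by
      intro k
      rw [Finset.sum_coe_sort G (fun i => (g k (T (x i))) ^ 2)]
      exact hrow k
    have h := Finset.sum_le_card_nsmul (Finset.univ : Finset G) _ _ (fun k _ => this k)
    simpa using h
  have hlog : 0 ≤ 1 + Real.log s.card := by
    have : (1 : ℝ) ≤ s.card := by exact_mod_cast hs0.card_pos
    have := Real.log_nonneg this
    linarith
  set l := 1 + Real.log s.card with hl
  have h1 : ((G.card : ℝ) * t) ^ 2 ≤ n * (G.card * (τ ^ 2 * l)) := by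
    calc ((G.card : ℝ) * t) ^ 2 ≤ (∑ i : G, ‖T (x i)‖) ^ 2 := by gcongr
      _ ≤ _ := htr
      _ ≤ _ := by gcongr
  have h2 : (G.card : ℝ) * t ^ 2 ≤ n * (τ ^ 2 * l) := by
    have : (G.card : ℝ) * (G.card * t ^ 2) ≤ G.card * (n * (τ ^ 2 * l)) := by nlinarith
    exact le_of_mul_le_mul_left this hg
  have h3 : t ^ 2 ≤ τ ^ 2 * (2 * n * l / s.card) := by
    rw [← mul_div_assoc, le_div_iff₀ hK]
    nlinarith [sq_nonneg t]
  set w := 2 * n * l / s.card with hw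
  have hw0 : 0 ≤ w := by positivity
  have hw1 : 2 * w ≤ 1 := by
    have : 2 * w = 4 * n * l / s.card := by rw [hw]; ring
    rw [this]; exact hsmall
  have h4 : t ^ p ≤ τ ^ p * w ^ (p / 2) := by
    have e1 : ∀ a : ℝ, 0 ≤ a → a ^ p = (a ^ 2) ^ (p / 2) := by
      intro a ha
      rw [← Real.rpow_natCast, ← Real.rpow_mul ha]
      congr 1; push_cast; ring
    rw [e1 t ht, e1 τ hτ0, ← Real.mul_rpow (by positivity) hw0]
    gcongr
  have h5 : w ^ (p / 2) ≤ w := by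
    have := Real.rpow_le_rpow_of_exponent_ge' hw0 (by linarith) (zero_le_one) (by linarith : 1 ≤ p / 2)
    simpa using this
  calc t ^ p ≤ τ ^ p * w ^ (p / 2) := h4
    _ ≤ τ ^ p * w := by gcongr
    _ = _ := by rw [hτp, hw]; field_simp; ring

lemma bd_chunk (p q : ℝ) (T : X →L[ℝ] Y) (m : ℕ) (P : ℝ) (hB : Bd p q T m P) (A : ℕ) :
    Bd p q T (A * m) (A * P) := by
  classical
  induction A with
  | zero =>
    intro ι s x hs hx
    have : s = ∅ := by
      rw [← Finset.card_eq_zero]; simpa using hs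
    simp [this]
  | succ A ih =>
    intro ι s x hs hx
    obtain ⟨u, hu, huc⟩ := Finset.exists_subset_card_eq (s := s) (n := min m s.card)
      (min_le_right _ _)
    have h1 := hB ι u x (by rw [huc]; exact min_le_left _ _) (fun f hf =>
      (Finset.sum_le_sum_of_subset_of_nonneg hu fun i _ _ => by positivity).trans (hx f hf))
    have h2 := ih ι (s \ u) x (by
      rw [Finset.card_sdiff_of_subset hu, huc]
      rw [Nat.succ_mul] at hs
      omega) (fun f hf =>
      (Finset.sum_le_sum_of_subset_of_nonneg Finset.sdiff_subset
        fun i _ _ => by positivity).trans (hx f hf))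
    rw [← Finset.sum_sdiff hu]
    push_cast
    linarith

lemma tele (a : ℝ) (ha : 2 ≤ a) :
    (1 + Real.log (a + 1)) / (a + 1) ^ 2 ≤
      (2 + Real.log a) / a - (2 + Real.log (a + 1)) / (a + 1) := by
  have h1 : Real.log (a + 1) - Real.log a ≤ 1 / a := by
    rw [← Real.log_div (by positivity) (by positivity)]
    have := Real.log_le_sub_one_of_pos (x := (a + 1) / a) (by positivity)
    have h : (a + 1) / a - 1 = 1 / a := by field_simp; ring
    linarith
  have h2 : 1 ≤ Real.log (a + 1) := by
    rw [Real.le_log_iff_exp_le (by positivity)]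
    have := Real.exp_one_lt_d9
    linarith
  set L := Real.log (a + 1)
  have h3 : (2 + L - 1 / a) / a ≤ (2 + Real.log a) / a := by
    gcongr; linarith
  have ha0 : 0 < a := by linarith
  have h4 : (1 + L) / (a + 1) ^ 2 ≤ (2 + L - 1 / a) / a - (2 + L) / (a + 1) := by
    have e : (2 + L - 1 / a) / a - (2 + L) / (a + 1) - (1 + L) / (a + 1) ^ 2
        = ((1 + L) * a - (a + 1)) / (a ^ 2 * (a + 1) ^ 2) := by
      field_simp; ring
    have : 0 ≤ ((1 + L) * a - (a + 1)) / (a ^ 2 * (a + 1) ^ 2) := by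
      apply div_nonneg _ (by positivity)
      nlinarith
    linarith
  linarith

lemma bd_step (p q : ℝ) (hq : 1 ≤ q) (hp : 2 ≤ p) (hpq : 1 / q = 1 / p + 1 / 2)
    (T : X →L[ℝ] Y) (n : ℕ) [FiniteDimensional ℝ (LinearMap.range (T : X →ₗ[ℝ] Y))]
    (hn : Module.finrank ℝ (LinearMap.range (T : X →ₗ[ℝ] Y)) ≤ n)
    (N : ℕ) (P : ℝ) (hP : 0 < P) (hB : Bd p q T N P)
    (M : ℕ) (hM : 2 ≤ M) (Q : ℝ) (hQ : Bd p q T M Q)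
    (hnM : 4 * n * ((2 + Real.log M) / M) ≤ 1 / 2) :
    Bd p q T N (Q + P / 2) := by
  classical
  let g : ℕ → ℝ := fun K => (2 + Real.log K) / K
  have hgt : ∀ K : ℕ, M ≤ K → (1 + Real.log ((K + 1 : ℕ) : ℝ)) / ((K + 1 : ℕ) : ℝ) ^ 2 ≤
      g K - g (K + 1) := by
    intro K hK
    have := tele K (by exact_mod_cast hM.trans hK)
    simpa [g] using this
  have hlogK : ∀ K : ℕ, 0 ≤ Real.log K := fun K => Real.log_natCast_nonneg K
  have hg0 : ∀ K, 0 ≤ g K := fun K => by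
    have := hlogK K
    simp only [g]; positivity
  have hganti : ∀ K, M ≤ K → g K ≤ g M := by
    intro K hK
    induction K, hK using Nat.le_induction with
    | base => exact le_rfl
    | succ K hK ih =>
      have h1 := hgt K hK
      have h2 : 0 ≤ (1 + Real.log ((K + 1 : ℕ) : ℝ)) / ((K + 1 : ℕ) : ℝ) ^ 2 := by
        have := hlogK (K + 1)
        positivity
      linarith
  have claim : ∀ K, M ≤ K → ∀ (ι : Type) (s : Finset ι) (x : ι → X), s.card = K → K ≤ N →
      (∀ f : X →L[ℝ] ℝ, ‖f‖ ≤ 1 → ∑ i ∈ s, |f (x i)| ^ q ≤ 1) →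
      ∑ i ∈ s, ‖T (x i)‖ ^ p ≤ Q + P * (4 * n) * (g M - g K) := by
    intro K hK
    induction K, hK using Nat.le_induction with
    | base =>
      intro ι s x hs _ hx
      have := hQ ι s x hs.le hx
      simpa using this
    | succ K hK ih =>
      intro ι s x hs hKN hx
      have hne : s.Nonempty := by rw [← Finset.card_pos]; omega
      obtain ⟨i, hi, hmin⟩ := Finset.exists_min_image s (fun i => ‖T (x i)‖) hne
      have h1 := ih ι (s.erase i) x (by rw [Finset.card_erase_of_mem hi]; omega) (by omega)
        (fun f hf => (Finset.sum_le_sum_of_subset_of_nonneg (Finset.erase_subset _ _)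
          fun i _ _ => by positivity).trans (hx f hf))
      have h2 := key p q hq hp hpq T n hn N P hP hB s x (by omega) hne hx
        ‖T (x i)‖ (norm_nonneg _) hmin (by
          rw [hs]
          have h3 := hganti (K + 1) (by omega)
          have h4 : (1 + Real.log ((K + 1 : ℕ) : ℝ)) / ((K + 1 : ℕ) : ℝ) ≤ g (K + 1) := by
            simp only [g]
            gcongr; norm_num
          have h5 : (0 : ℝ) ≤ 4 * n := by positivity
          have h6 := mul_le_mul_of_nonneg_left (h4.trans h3) h5
          rw [mul_div_assoc]
          simp only [g] at h6
          linarith)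
      rw [hs] at h2
      have h3 := mul_le_mul_of_nonneg_left (hgt K hK) (by positivity : 0 ≤ P * (4 * n))
      rw [← Finset.add_sum_erase s _ hi]
      have h4 : P * (4 * n * (1 + Real.log ((K + 1 : ℕ) : ℝ)) / ((K + 1 : ℕ) : ℝ) ^ 2)
        = P * (4 * n) * ((1 + Real.log ((K + 1 : ℕ) : ℝ)) / ((K + 1 : ℕ) : ℝ) ^ 2) := by ring
      rw [h4] at h2
      linarith
  intro ι s x hs hx
  rcases le_total s.card M with h | h
  · have := hQ ι s x h hx
    linarith
  · have h1 := claim s.card h ι s x rfl hs hx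
    have h2 : P * (4 * n) * (g M - g s.card) ≤ P / 2 := by
      have h3 := hg0 s.card
      have h4 : P * (4 * n) * (g M - g s.card) ≤ P * (4 * n) * g M := by
        gcongr; linarith
      have h5 : P * (4 * n * g M) ≤ P * (1 / 2) := by gcongr
      linarith
    linarith

lemma bd_trivial (p q : ℝ) (hq : 1 ≤ q) (hp : 2 ≤ p) (T : X →L[ℝ] Y) (N : ℕ) :
    Bd p q T N (N * ‖T‖ ^ p) := by
  intro ι s x hs hx
  have h1 : ∀ i ∈ s, ‖T (x i)‖ ^ p ≤ ‖T‖ ^ p := by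
    intro i hi
    obtain ⟨f, hf1, hf2⟩ := exists_dual_vector'' ℝ (x i)
    have h2 := hx f hf1
    have h3 : |f (x i)| ^ q ≤ 1 :=
      (Finset.single_le_sum (f := fun i => |f (x i)| ^ q) (fun i _ => by positivity) hi).trans h2
    have h4 : ‖x i‖ ≤ 1 := by
      by_contra hcon
      push Not at hcon
      rw [hf2] at h3
      simp only [RCLike.ofReal_real_eq_id, id, abs_norm] at h3
      have := Real.one_lt_rpow hcon (by linarith : 0 < q)
      linarith
    have h5 : ‖T (x i)‖ ≤ ‖T‖ := T.unit_le_opNorm _ h4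
    have : 0 ≤ p := by linarith
    gcongr
  have h := Finset.sum_le_card_nsmul s _ _ h1
  rw [nsmul_eq_mul] at h
  refine h.trans ?_
  gcongr

lemma bd_main (p q : ℝ) (hq : 1 ≤ q) (hp : 2 ≤ p) (hpq : 1 / q = 1 / p + 1 / 2)
    (T : X →L[ℝ] Y) (n : ℕ) (hn0 : 1 ≤ n)
    [FiniteDimensional ℝ (LinearMap.range (T : X →ₗ[ℝ] Y))]
    (hn : Module.finrank ℝ (LinearMap.range (T : X →ₗ[ℝ] Y)) ≤ n)
    (P : ℝ) (hP : 0 ≤ P) (hB : Bd p q T (⌊(n : ℝ) * (1 + Real.log n)⌋₊) P) (N : ℕ) :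
    Bd p q T N (400 * P) := by
  set m := ⌊(n : ℝ) * (1 + Real.log n)⌋₊ with hm
  have hn1 : (1 : ℝ) ≤ n := by exact_mod_cast hn0
  set ℓ := Real.log n with hℓ
  have hℓ0 : 0 ≤ ℓ := Real.log_nonneg hn1
  have hv : 1 ≤ (n : ℝ) * (1 + ℓ) := by nlinarith
  have hm1 : 1 ≤ m := by rw [hm]; exact Nat.le_floor (by exact_mod_cast hv)
  have hm1' : (1 : ℝ) ≤ m := by exact_mod_cast hm1
  have hmle : (m : ℝ) ≤ n * (1 + ℓ) := Nat.floor_le (by linarith)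
  have hmge : (n : ℝ) * (1 + ℓ) ≤ 2 * m := by
    have := Nat.lt_floor_add_one ((n : ℝ) * (1 + ℓ))
    rw [← hm] at this
    linarith
  have hQ := bd_chunk p q T m P hB 200
  have hnum : 4 * n * ((2 + Real.log ((200 * m : ℕ) : ℝ)) / ((200 * m : ℕ) : ℝ)) ≤ 1 / 2 := by
    push_cast
    have h1 : Real.log (200 * m) ≤ 6 + 2 * ℓ := by
      rw [Real.log_mul (by norm_num) (by positivity)]
      have h2 : Real.log 200 ≤ 6 := by
        rw [Real.log_le_iff_le_exp (by norm_num)]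
        have := Real.exp_one_gt_d9
        have h3 : Real.exp 6 = Real.exp 1 ^ 6 := by rw [← Real.exp_nat_mul]; norm_num
        rw [h3]
        calc (200 : ℝ) ≤ 2.7 ^ 6 := by norm_num
          _ ≤ _ := by gcongr; linarith
      have h3 : Real.log m ≤ ℓ + Real.log (1 + ℓ) := by
        rw [hℓ, ← Real.log_mul (by positivity) (by positivity)]
        exact Real.log_le_log (by positivity) hmle
      have h4 := Real.log_le_sub_one_of_pos (x := 1 + ℓ) (by positivity)
      linarith
    rw [← mul_div_assoc, div_le_iff₀ (by positivity)]
    have h5 : (n : ℝ) * (2 + Real.log (200 * m)) ≤ n * (8 + 2 * ℓ) :=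
      mul_le_mul_of_nonneg_left (by linarith) (by positivity)
    nlinarith
  let P0 : ℝ := N * ‖T‖ ^ p + 1
  have hP0 : 0 < P0 := by positivity
  have hiter : ∀ k : ℕ, Bd p q T N (400 * P + P0 / 2 ^ k) := by
    intro k
    induction k with
    | zero =>
      intro ι s x hs hx
      have := bd_trivial p q hq hp T N ι s x hs hx
      simp only [P0, pow_zero, div_one]
      linarith
    | succ k ih =>
      have h := bd_step p q hq hp hpq T n hn N _ (by positivity) ih (200 * m) (by omega) _ hQ hnum
      have e : ((200 : ℕ) : ℝ) * P + (400 * P + P0 / 2 ^ k) / 2 = 400 * P + P0 / 2 ^ (k + 1) := by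
        push_cast; rw [pow_succ]; field_simp; ring
      rwa [e] at h
  intro ι s x hs hx
  have hlim : Filter.Tendsto (fun k : ℕ => 400 * P + P0 / 2 ^ k) Filter.atTop
      (nhds (400 * P + 0)) := by
    refine Filter.Tendsto.const_add _ ?_
    have := (tendsto_pow_atTop_nhds_zero_of_lt_one (r := (1 / 2 : ℝ)) (by norm_num)
      (by norm_num)).const_mul P0
    simpa [div_eq_mul_inv] using this
  rw [add_zero] at hlim
  exact ge_of_tendsto' hlim (fun k => hiter k ι s x hs hx)

end core

lemma eSum_eq (p : ℝ≥0∞) (hp : p ≠ ∞) (hp0 : 0 < p.toReal) {ι : Type*} [Fintype ι] (a : ι → ℝ)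
    (ha : ∀ i, 0 ≤ a i) :
    eSum p (fun k => ENNReal.ofReal (a k)) =
      ENNReal.ofReal ((∑ i, a i ^ p.toReal) ^ (1 / p.toReal)) := by
  rw [eSum, if_neg hp]
  rw [← ENNReal.ofReal_rpow_of_nonneg (Finset.sum_nonneg fun i _ => Real.rpow_nonneg (ha i) _)
    (by positivity), ENNReal.ofReal_sum_of_nonneg (fun i _ => Real.rpow_nonneg (ha i) _)]
  congr 1
  refine Finset.sum_congr rfl fun i _ => ?_
  rw [ENNReal.ofReal_rpow_of_nonneg (ha i) hp0.le]

lemma eSum_le_iff (p : ℝ≥0∞) (hp : p ≠ ∞) (hp0 : 0 < p.toReal) {ι : Type*} [Fintype ι] (a : ι → ℝ)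
    (ha : ∀ i, 0 ≤ a i) (B : ℝ) (hB : 0 ≤ B) :
    eSum p (fun k => ENNReal.ofReal (a k)) ≤ ENNReal.ofReal B ↔
      ∑ i, a i ^ p.toReal ≤ B ^ p.toReal := by
  have h0 : 0 ≤ ∑ i, a i ^ p.toReal := Finset.sum_nonneg fun i _ => Real.rpow_nonneg (ha i) _
  rw [eSum_eq p hp hp0 a ha, ENNReal.ofReal_le_ofReal_iff hB, one_div,
    Real.rpow_inv_le_iff_of_pos h0 hB hp0]

section bridge
variable {X Y : Type*} [NormedAddCommGroup X] [NormedSpace ℝ X]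
    [NormedAddCommGroup Y] [NormedSpace ℝ Y]

lemma weakLq_le_one_iff (q : ℝ≥0∞) (hq : q ≠ ∞) (hq0 : 0 < q.toReal) {n : ℕ} (x : Fin n → X) :
    weakLq q x ≤ 1 ↔ ∀ f : X →L[ℝ] ℝ, ‖f‖ ≤ 1 → ∑ i, |f (x i)| ^ q.toReal ≤ 1 := by
  unfold weakLq
  rw [iSup_le_iff]
  have h : ∀ f : X →L[ℝ] ℝ, eSum q (fun k => ENNReal.ofReal |f (x k)|) ≤ 1 ↔
      ∑ i, |f (x i)| ^ q.toReal ≤ 1 := by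
    intro f
    have := eSum_le_iff q hq hq0 (fun k => |f (x k)|) (fun _ => abs_nonneg _) 1 zero_le_one
    rwa [ENNReal.ofReal_one, Real.one_rpow] at this
  constructor
  · intro H f hf
    exact (h f).1 (H ⟨f, hf⟩)
  · rintro H ⟨f, hf⟩
    exact (h f).2 (H f hf)

lemma bd_of_piN (p q : ℝ≥0∞) (hp : p ≠ ∞) (hp0 : 0 < p.toReal) (hq : q ≠ ∞) (hq0 : 0 < q.toReal)
    (T : X →L[ℝ] Y) (m : ℕ) (hfin : piN p q m T ≠ ∞) :
    Bd p.toReal q.toReal T m ((piN p q m T).toReal ^ p.toReal) := by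
  classical
  intro ι s x hs hx
  have hcard : Fintype.card s ≤ Fintype.card (Fin m) := by simpa using hs
  obtain ⟨j⟩ := Function.Embedding.nonempty_of_card_le hcard
  let z : Fin m → X := Function.extend j (fun i : s => x i) 0
  have hsum : ∀ F : X → ℝ, F 0 = 0 → ∑ k, F (z k) = ∑ i ∈ s, F (x i) := by
    intro F hF
    rw [← Finset.sum_coe_sort s (fun i => F (x i))]
    refine (Fintype.sum_of_injective j j.injective _ _ ?_ ?_).symm
    · intro k hk
      simp only [z]
      rw [Function.extend_apply' _ _ _ (by simpa using hk)]
      simpa using hF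
    · intro i
      simp only [z]
      rw [j.injective.extend_apply]
  have hz : weakLq q z ≤ 1 := by
    rw [weakLq_le_one_iff q hq hq0]
    intro f hf
    rw [hsum (fun v => |f v| ^ q.toReal) (by simp [Real.zero_rpow hq0.ne'])]
    exact hx f hf
  have h1 : eSum p (fun k => ENNReal.ofReal ‖T (z k)‖) ≤ piN p q m T :=
    le_iSup (fun x : {x : Fin m → X // weakLq q x ≤ 1} =>
      eSum p fun k => ENNReal.ofReal ‖T (x.1 k)‖) ⟨z, hz⟩
  rw [← ENNReal.ofReal_toReal hfin, eSum_le_iff p hp hp0 _ (fun _ => norm_nonneg _) _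
    ENNReal.toReal_nonneg] at h1
  rwa [hsum (fun v => ‖T v‖ ^ p.toReal) (by simp [Real.zero_rpow hp0.ne'])] at h1

lemma piN_le_of_bd (p q : ℝ≥0∞) (hp : p ≠ ∞) (hp0 : 0 < p.toReal) (hq : q ≠ ∞)
    (hq0 : 0 < q.toReal) (T : X →L[ℝ] Y) (N : ℕ) (B : ℝ) (hB : 0 ≤ B)
    (h : Bd p.toReal q.toReal T N (B ^ p.toReal)) : piN p q N T ≤ ENNReal.ofReal B := by
  refine iSup_le ?_
  rintro ⟨x, hx⟩
  rw [weakLq_le_one_iff q hq hq0] at hx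
  rw [eSum_le_iff p hp hp0 _ (fun _ => norm_nonneg _) _ hB]
  exact h (Fin N) Finset.univ x (by simp) hx

lemma piN_eq_zero (p q : ℝ≥0∞) (hp0 : p ≠ 0) (T : X →L[ℝ] Y) (hT : ∀ x, T x = 0) (N : ℕ) :
    piN p q N T = 0 := by
  simp only [piN, hT, norm_zero, ENNReal.ofReal_zero]
  rw [← nonpos_iff_eq_zero]
  refine iSup_le fun x => ?_
  rw [eSum]
  split_ifs with h
  · simp
  · have : 0 < p.toReal := ENNReal.toReal_pos hp0 h
    simp [ENNReal.zero_rpow_of_pos this]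
    exact this

lemma eSum_mono (q : ℝ≥0∞) {ι κ : Type*} [Fintype ι] [Fintype κ] [DecidableEq κ] (k : ι) (a : ℝ≥0∞)
    (j : κ) (hq0 : 0 < q.toReal) (f : ι → ℝ≥0∞) (hf : f k = a) :
    eSum q (fun i : κ => if i = j then a else 0) ≤ eSum q f := by
  classical
  unfold eSum
  split_ifs with h
  · refine iSup_le fun i => ?_
    beta_reduce
    split_ifs with h1
    · rw [← hf]; exact le_iSup f k
    · exact zero_le
  · gcongr
    have : ∀ i, (if i = j then a else 0) ^ q.toReal = if i = j then a ^ q.toReal else 0 := by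
      intro i
      split_ifs <;> simp [ENNReal.zero_rpow_of_pos hq0]
    simp only [this, Finset.sum_ite_eq', Finset.mem_univ, if_true]
    rw [← hf]
    exact Finset.single_le_sum (f := fun i => f i ^ q.toReal) (fun _ _ => zero_le) (Finset.mem_univ k)

lemma piN_top_le (q : ℝ≥0∞) (hq0 : 0 < q.toReal) (T : X →L[ℝ] Y) (N m : ℕ) (hm : 1 ≤ m) :
    piN ∞ q N T ≤ piN ∞ q m T := by
  refine iSup_le ?_
  rintro ⟨x, hx⟩
  rw [eSum, if_pos rfl]
  refine iSup_le fun k => ?_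
  let j : Fin m := ⟨0, hm⟩
  let z : Fin m → X := fun i => if i = j then x k else 0
  have hz : weakLq q z ≤ 1 := by
    refine le_trans (iSup_mono fun f => ?_) hx
    have h := eSum_mono q k (ENNReal.ofReal |f.1 (x k)|) j hq0
      (fun k => ENNReal.ofReal |f.1 (x k)|) rfl
    refine le_trans (le_of_eq ?_) h
    congr 1
    funext i
    simp only [z]
    split_ifs <;> simp
  have h1 : eSum ∞ (fun k => ENNReal.ofReal ‖T (z k)‖) ≤ piN ∞ q m T :=
    le_iSup (fun x : {x : Fin m → X // weakLq q x ≤ 1} =>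
      eSum ∞ fun k => ENNReal.ofReal ‖T (x.1 k)‖) ⟨z, hz⟩
  refine le_trans ?_ h1
  rw [eSum, if_pos rfl]
  refine le_trans (le_of_eq ?_) (le_iSup _ j)
  simp [z]

end bridge

/-- for `1 ≤ q < p ≤ ∞` with `1/q = 1/p + 1/2` (i.e. `r = 2`),
there is an absolute constant `c` such that `π_{p,q}(T) ≤ c · π_{p,q}^{⌊n(1+ln n)⌋}(T)`
for every operator `T` between real Banach spaces of rank at most `n`. -/
theorem statement1 :
    ∃ c : ℝ≥0, 0 < c ∧
      ∀ (q p : ℝ≥0∞), 1 ≤ q → q < p → 1 / q = 1 / p + 1 / 2 →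
        ∀ (X Y : Type*) [NormedAddCommGroup X] [NormedSpace ℝ X] [CompleteSpace X]
          [NormedAddCommGroup Y] [NormedSpace ℝ Y] [CompleteSpace Y]
          (n : ℕ) (T : X →L[ℝ] Y), RankLE T n →
          piPQ p q T ≤ (c : ℝ≥0∞) * piN p q (⌊(n : ℝ) * (1 + Real.log n)⌋₊) T := by
  refine ⟨400, by norm_num, ?_⟩
  intro q p hq hqp hpq X Y _ _ _ _ _ _ n T hT
  obtain ⟨hfd, hrk⟩ := hT
  have hq_top : q ≠ ∞ := hqp.ne_top
  have hq_ne : q ≠ 0 := (lt_of_lt_of_le one_pos hq).ne'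
  have hp_ne : p ≠ 0 := (lt_of_le_of_lt zero_le hqp).ne'
  have hq0 : 0 < q.toReal := ENNReal.toReal_pos hq_ne hq_top
  refine iSup_le fun N => ?_
  rcases Nat.eq_zero_or_pos n with hn | hn
  · have hz : ∀ x, T x = 0 := by
      subst hn
      have h0 : LinearMap.range (T : X →ₗ[ℝ] Y) = ⊥ :=
        Submodule.finrank_eq_zero.1 (Nat.le_zero.1 hrk)
      rw [LinearMap.range_eq_bot] at h0
      intro x
      exact congrArg (fun S : X →ₗ[ℝ] Y => S x) h0
    rw [piN_eq_zero p q hp_ne T hz N]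
    exact zero_le
  have hn1 : (1 : ℝ) ≤ n := by exact_mod_cast hn
  have hm1 : 1 ≤ ⌊(n : ℝ) * (1 + Real.log n)⌋₊ := by
    have := Real.log_nonneg hn1
    refine Nat.le_floor ?_
    push_cast
    nlinarith
  by_cases hp : p = ∞
  · subst hp
    refine (piN_top_le q hq0 T N _ hm1).trans ?_
    refine le_mul_of_one_le_left zero_le ?_
    norm_num
  have hp0 : 0 < p.toReal := ENNReal.toReal_pos hp_ne hp
  have hq1 : 1 ≤ q.toReal := by
    rw [← ENNReal.toReal_one]
    exact ENNReal.toReal_mono hq_top hq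
  have hpqr : 1 / q.toReal = 1 / p.toReal + 1 / 2 := by
    have h := congrArg ENNReal.toReal hpq
    rw [ENNReal.toReal_add (by simp [hp_ne]) (by simp)] at h
    simpa using h
  have hp2 : 2 ≤ p.toReal := by
    have h1 : 1 / q.toReal ≤ 1 := by
      rw [div_le_one hq0]; exact hq1
    have h2 : 1 / p.toReal ≤ 1 / 2 := by linarith
    exact (one_div_le_one_div hp0 (by norm_num)).1 h2
  set m := ⌊(n : ℝ) * (1 + Real.log n)⌋₊ with hm
  by_cases hfin : piN p q m T = ∞
  · rw [hfin, ENNReal.mul_top (by norm_num)]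
    exact le_top
  have hB := bd_of_piN p q hp hp0 hq_top hq0 T m hfin
  have hmain := bd_main p.toReal q.toReal hq1 hp2 hpqr T n hn hrk _ (by positivity) hB N
  set Q := (piN p q m T).toReal with hQ
  have hQ0 : 0 ≤ Q := ENNReal.toReal_nonneg
  have h := piN_le_of_bd p q hp hp0 hq_top hq0 T N (400 * Q) (by positivity) (by
    intro ι s x hs hx
    refine (hmain ι s x hs hx).trans ?_
    rw [Real.mul_rpow (by norm_num) hQ0]
    have : (400 : ℝ) ≤ 400 ^ p.toReal :=
      Real.self_le_rpow_of_one_le (by norm_num) (by linarith)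
    gcongr)
  refine h.trans (le_of_eq ?_)
  rw [ENNReal.ofReal_mul (by norm_num), hQ, ENNReal.ofReal_toReal hfin]
  simp

end
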